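/- There exists a constant r₀>0 such that, for all r≥r₀ and all b≥r₀, the Neumann ground state energy vanishes: e_N(b,r)=0. -/

import Mathlib

open MeasureTheory Real Set Filter Topology

noncomputable section

/-- The open square `Q_r = (-r/2, r/2) × (-r/2, r/2)`. -/
def Qsq (r : ℝ) : Set (ℝ × ℝ) := Ioo (-r/2) (r/2) ×ˢ Ioo (-r/2) (r/2)

/-- The vertical strip `S_R = (-R/2, R/2) × ℝ`. -/
def Strip (R : ℝ) : Set (ℝ × ℝ) := Ioo (-R/2) (R/2) ×ˢ (univ : Set ℝ)

/-- The magnetic potential `A₀(x) = (-x₂/2, x₁/2)` of the constant unit magnetic field. -/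
def A₀ (x : ℝ × ℝ) : ℝ × ℝ := (-x.2 / 2, x.1 / 2)

/-- The magnetic potential `A_van(x) = (-x₂²/2, 0)` generating the field `B(x) = x₂`. -/
def Avan (x : ℝ × ℝ) : ℝ × ℝ := (-x.2 ^ 2 / 2, 0)

/-- The magnetic gradient energy density `|(∇ - iA)u|²` at `x`. -/
def magGradSq (A : ℝ × ℝ → ℝ × ℝ) (u : ℝ × ℝ → ℂ) (x : ℝ × ℝ) : ℝ :=
  ‖fderiv ℝ u x (1, 0) - Complex.I * ((A x).1 : ℂ) * u x‖ ^ 2 +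
  ‖fderiv ℝ u x (0, 1) - Complex.I * ((A x).2 : ℂ) * u x‖ ^ 2

/-- The Ginzburg–Landau functional `F_{b,Q_r}` on the square `Q_r`. -/
def Fsq (b r : ℝ) (u : ℝ × ℝ → ℂ) : ℝ :=
  ∫ x in Qsq r, (b * magGradSq A₀ u x - ‖u x‖ ^ 2 + ‖u x‖ ^ 4 / 2)

/-- (Smooth surrogate of) membership in `H¹(Q_r; ℂ)`. -/
def MemH1sq (u : ℝ × ℝ → ℂ) : Prop := ContDiff ℝ 1 u

/-- (Smooth surrogate of) membership in `H¹₀(Q_r; ℂ)`: vanishing on the boundary. -/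
def MemH10sq (r : ℝ) (u : ℝ × ℝ → ℂ) : Prop :=
  ContDiff ℝ 1 u ∧ ∀ x ∈ frontier (Qsq r), u x = 0

/-- The Dirichlet ground-state energy `e_D(b, r)`. -/
def eD (b r : ℝ) : ℝ := sInf (Fsq b r '' {u | MemH10sq r u})

/-- The Neumann ground-state energy `e_N(b, r)`. -/
def eN (b r : ℝ) : ℝ := sInf (Fsq b r '' {u | MemH1sq u})

/-- The energy density of the strip functional `𝓔_{L,R}` at `x`. -/
def stripDensity (L : ℝ) (u : ℝ × ℝ → ℂ) (x : ℝ × ℝ) : ℝ :=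
  magGradSq Avan u x - L ^ (-(2:ℝ)/3) * ‖u x‖ ^ 2 + (L ^ (-(2:ℝ)/3) / 2) * ‖u x‖ ^ 4

/-- The strip functional `𝓔_{L,R}`. -/
def Estrip (L R : ℝ) (u : ℝ × ℝ → ℂ) : ℝ := ∫ x in Strip R, stripDensity L u x

/-- (Surrogate of) membership in the space `H¹_{mag,0}(S_R)`. -/
def MemH1mag0 (R : ℝ) (u : ℝ × ℝ → ℂ) : Prop :=
  ContDiff ℝ 1 u ∧
  IntegrableOn (fun x => ‖u x‖ ^ 2) (Strip R) ∧
  IntegrableOn (magGradSq Avan u) (Strip R) ∧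
  IntegrableOn (fun x => ‖u x‖ ^ 4) (Strip R) ∧
  ∀ x ∈ frontier (Strip R), u x = 0

/-- The ground-state energy `e_gs(L; R)` of the strip functional. -/
def egs (L R : ℝ) : ℝ := sInf (Estrip L R '' {u | MemH1mag0 R u})

/-- `g : (0,∞) → ℝ` is the thermodynamic limit of the Dirichlet square energies. -/
def IsLimitG (g : ℝ → ℝ) : Prop :=
  ∀ b > 0, Tendsto (fun r => eD b r / r ^ 2) atTop (nhds (g b))

/-- `E : (0,∞) → ℝ` is the large-`R` limit of the strip energies. -/
def IsLimitE (E : ℝ → ℝ) : Prop :=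
  ∀ L > 0, Tendsto (fun R => egs L R / R) atTop (nhds (E L))

/-!
The field is felt through parallel transport. Along a segment in the direction `v` the transported
difference of `u` is the integral of the covariant derivative `∇_v u - i A(v) u`, so by
Cauchy–Schwarz its mean square is bounded by the magnetic Dirichlet energy. Going round the
parallelogram spanned by `v` and `w` multiplies `u` by the holonomy `exp(-2iω)`, where `2ω` is the
flux through the parallelogram; as long as this is not `1`, `|u(x)|` itself is controlled by the
transported differences along the four sides. On the square each point of a quadrant uses a
parallelogram pointing towards the opposite quadrant. This yields
`sin² (ℓ² / 2) ∫ |u|² ≤ 8 ℓ² ∫ |(∇ - iA₀)u|²` whenever `2ℓ < r`, which makes the quadratic part of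
the functional nonnegative for large `b`; the best competitor is then `u = 0`.
-/

open scoped ENNReal

lemma rpow_lintegral_le_lintegral_rpow {α : Type*} [MeasurableSpace α] {μ : Measure α}
    [IsProbabilityMeasure μ] {f : α → ℝ≥0∞} (hf : AEMeasurable f μ) {p : ℝ} (hp : 1 ≤ p) :
    (∫⁻ a, f a ∂μ) ^ p ≤ ∫⁻ a, f a ^ p ∂μ := by
  have hp₀ : 0 < p := one_pos.trans_le hp
  have hnorm : eLpNorm' f 1 μ ≤ eLpNorm' f p μ :=
    eLpNorm'_le_eLpNorm'_of_exponent_le one_pos hp μ hf.aestronglyMeasurable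
  calc (∫⁻ a, f a ∂μ) ^ p = eLpNorm' f 1 μ ^ p := by simp [eLpNorm'_eq_lintegral_enorm]
    _ ≤ eLpNorm' f p μ ^ p := by gcongr
    _ = ∫⁻ a, f a ^ p ∂μ := by simp [← lintegral_rpow_enorm_eq_rpow_eLpNorm' hp₀]

section Magnetic

variable {E F : Type*} [NormedAddCommGroup E] [NormedSpace ℝ E]
  [NormedAddCommGroup F] [NormedSpace ℂ F]
  {A : E →L[ℝ] E →L[ℝ] ℝ} {u : E → F}

/-- The covariant derivative `∇_v u - i A(v) u` in the direction `v`, for the magnetic potential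
`x ↦ A x`. Linear potentials suffice here: if `A` is alternating, this is the symmetric gauge of the
constant magnetic field `2 A`. -/
def magDeriv (A : E →L[ℝ] E →L[ℝ] ℝ) (u : E → F) (v x : E) : F :=
  fderiv ℝ u x v - (Complex.I * A x v) • u x

/-- The difference between the value of `u` at `x + v`, transported back to `x` along the segment by
means of the phase `exp (-i A(x)(v))`, and its value at `x`. The phase is the right one for
alternating `A`, as then `A (x + s • v) v` does not depend on `s`. -/
def magDiff (A : E →L[ℝ] E →L[ℝ] ℝ) (u : E → F) (v x : E) : F :=
  Circle.exp (-A x v) • u (x + v) - u x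

lemma magDeriv_smul (A : E →L[ℝ] E →L[ℝ] ℝ) (u : E → F) (c : ℝ) (v x : E) :
    magDeriv A u (c • v) x = c • magDeriv A u v x := by
  simp only [magDeriv, map_smul, smul_sub, smul_eq_mul, Complex.ofReal_mul, ← Complex.coe_smul,
    smul_smul]
  congr 2
  ring

lemma continuous_magDeriv (hu : ContDiff ℝ 1 u) (v : E) : Continuous (magDeriv A u v) := by
  have hcont := hu.continuous
  unfold magDeriv
  fun_prop

lemma continuous_magDiff (hu : Continuous u) (v : E) : Continuous (magDiff A u v) := by
  unfold magDiff
  fun_prop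

lemma hasDerivAt_circleExp_smul_comp_segment (hA : A.toBilinForm.IsAlt)
    (hu : Differentiable ℝ u) (v x : E) (s : ℝ) :
    HasDerivAt (fun s : ℝ => Circle.exp (-(s * A x v)) • u (x + s • v))
      (Circle.exp (-(s * A x v)) • magDeriv A u v (x + s • v)) s := by
  have hphase : HasDerivAt (fun s : ℝ => Complex.exp (-(s * A x v) * Complex.I))
      (Complex.exp (-(s * A x v) * Complex.I) * (-(1 * A x v) * Complex.I)) s :=
    (((Complex.ofRealCLM.hasDerivAt (x := s)).mul_const _).neg.mul_const _).cexp
  have hline : HasDerivAt (fun s : ℝ => x + s • v) v s := by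
    simpa using ((hasDerivAt_id s).smul_const v).const_add x
  have hAv : A (x + s • v) v = A x v := by
    have : A v v = 0 := hA v
    simp [this]
  have hcomp : HasDerivAt (fun s : ℝ => u (x + s • v)) (fderiv ℝ u (x + s • v) v) s :=
    (hu _).hasFDerivAt.comp_hasDerivAt s hline
  simp only [Circle.smul_def, Circle.coe_exp, magDeriv, hAv]
  push_cast
  refine (hphase.smul hcomp).congr_deriv ?_
  module

lemma enorm_magDiff_sq_le_lintegral (hA : A.toBilinForm.IsAlt) (hu : ContDiff ℝ 1 u) (v x : E) :
    ‖magDiff A u v x‖ₑ ^ 2 ≤ ∫⁻ s in Icc (0 : ℝ) 1, ‖magDeriv A u v (x + s • v)‖ₑ ^ 2 := by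
  have hprob : IsProbabilityMeasure (volume.restrict (Icc (0 : ℝ) 1)) := ⟨by simp⟩
  have hcont : Continuous fun s : ℝ => magDeriv A u v (x + s • v) :=
    (continuous_magDeriv hu v).comp (by fun_prop)
  set f : ℝ → F := fun s => Circle.exp (-(s * A x v)) • u (x + s • v) with hf
  have hderiv (s : ℝ) :=
    hasDerivAt_circleExp_smul_comp_segment hA (hu.differentiable one_ne_zero) v x s
  have hf_C1 : ContDiff ℝ 1 f :=
    contDiff_one_iff_deriv.2 ⟨fun s => (hderiv s).differentiableAt, by
      rw [funext fun s => (hderiv s).deriv]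
      fun_prop⟩
  have hftc : ‖magDiff A u v x‖ₑ ≤ ∫⁻ s in Icc (0 : ℝ) 1, ‖magDeriv A u v (x + s • v)‖ₑ := by
    have hf_diff : f 1 - f 0 = magDiff A u v x := by simp [hf, magDiff]
    have hf_deriv (s : ℝ) : ‖deriv f s‖ₑ = ‖magDeriv A u v (x + s • v)‖ₑ := by
      rw [(hderiv s).deriv, ← ofReal_norm, Circle.norm_smul, ofReal_norm]
    simpa only [hf_diff, hf_deriv] using
      enorm_sub_le_lintegral_deriv_of_contDiffOn_Icc hf_C1.contDiffOn zero_le_one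
  calc ‖magDiff A u v x‖ₑ ^ 2
      ≤ (∫⁻ s in Icc (0 : ℝ) 1, ‖magDeriv A u v (x + s • v)‖ₑ) ^ 2 := by gcongr
    _ ≤ ∫⁻ s in Icc (0 : ℝ) 1, ‖magDeriv A u v (x + s • v)‖ₑ ^ 2 := by
      exact_mod_cast rpow_lintegral_le_lintegral_rpow hcont.enorm.aemeasurable one_le_two

lemma circleExp_smul_magDiff_add_magDiff (A : E →L[ℝ] E →L[ℝ] ℝ) (u : E → F) (v w x : E) :
    Circle.exp (-A x v) • magDiff A u w (x + v) + magDiff A u v x =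
      Circle.exp (-(A x (v + w) + A v w)) • u (x + v + w) - u x := by
  have hphase : Circle.exp (-(A x (v + w) + A v w)) =
      Circle.exp (-A x v) * Circle.exp (-A (x + v) w) := by
    rw [← Circle.exp_add]
    simp only [map_add, add_apply]
    congr 1
    ring
  rw [hphase, magDiff, magDiff, smul_sub, smul_smul]
  abel

lemma abs_two_mul_sin_mul_norm_le (hA : A.toBilinForm.IsAlt) (u : E → F) (v w x : E) :
    |2 * sin (A v w)| * ‖u x‖ ≤ ‖magDiff A u v x‖ + ‖magDiff A u w (x + v)‖ +
      ‖magDiff A u w x‖ + ‖magDiff A u v (x + w)‖ := by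
  have hskew : A w v = -A v w := (hA.neg_eq v w).symm
  set p := Circle.exp (-A x v) • magDiff A u w (x + v) + magDiff A u v x with hp
  set q := Circle.exp (-A x w) • magDiff A u v (x + w) + magDiff A u w x with hq
  have hloop : (Complex.exp (Complex.I * (-2 * A v w : ℝ)) - 1) • u x =
      p - Circle.exp (-2 * A v w) • q := by
    rw [hp, hq, circleExp_smul_magDiff_add_magDiff, circleExp_smul_magDiff_add_magDiff, hskew]
    have hphase : Circle.exp (-(A x (v + w) + A v w)) =
        Circle.exp (-2 * A v w) * Circle.exp (-(A x (w + v) + -A v w)) := by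
      rw [← Circle.exp_add, add_comm w v]
      congr 1
      ring
    have hcoe : Complex.exp (Complex.I * (-2 * A v w : ℝ)) = Circle.exp (-2 * A v w) := by
      rw [Circle.coe_exp, mul_comm]
    rw [hphase, hcoe, add_right_comm x w v, smul_sub, smul_smul, sub_smul, one_smul,
      Circle.smul_def (Circle.exp (-2 * A v w)) (u x)]
    abel
  have hhol : ‖Complex.exp (Complex.I * (-2 * A v w : ℝ)) - 1‖ = |2 * sin (A v w)| := by
    rw [Complex.norm_exp_I_mul_ofReal_sub_one, show -2 * A v w / 2 = -A v w by ring, sin_neg,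
      mul_neg, norm_neg, norm_eq_abs]
  have hp_le : ‖p‖ ≤ ‖magDiff A u v x‖ + ‖magDiff A u w (x + v)‖ := by
    rw [hp]
    exact (norm_add_le _ _).trans_eq (by rw [Circle.norm_smul, add_comm])
  have hq_le : ‖q‖ ≤ ‖magDiff A u w x‖ + ‖magDiff A u v (x + w)‖ := by
    rw [hq]
    exact (norm_add_le _ _).trans_eq (by rw [Circle.norm_smul, add_comm])
  calc |2 * sin (A v w)| * ‖u x‖ = ‖p - Circle.exp (-2 * A v w) • q‖ := by
        rw [← hloop, norm_smul, hhol]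
    _ ≤ ‖p‖ + ‖q‖ := (norm_sub_le _ _).trans_eq (by rw [Circle.norm_smul])
    _ ≤ ‖magDiff A u v x‖ + ‖magDiff A u w (x + v)‖ + ‖magDiff A u w x‖ +
          ‖magDiff A u v (x + w)‖ := by linarith

lemma enorm_sin_sq_mul_enorm_sq_le (hA : A.toBilinForm.IsAlt) (u : E → F) (v w x : E) :
    ‖sin (A v w)‖ₑ ^ 2 * ‖u x‖ₑ ^ 2 ≤ ‖magDiff A u v x‖ₑ ^ 2 + ‖magDiff A u w (x + v)‖ₑ ^ 2 +
      ‖magDiff A u w x‖ₑ ^ 2 + ‖magDiff A u v (x + w)‖ₑ ^ 2 := by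
  have hreal : ‖sin (A v w)‖ ^ 2 * ‖u x‖ ^ 2 ≤
      ‖magDiff A u v x‖ ^ 2 + ‖magDiff A u w (x + v)‖ ^ 2 +
        ‖magDiff A u w x‖ ^ 2 + ‖magDiff A u v (x + w)‖ ^ 2 := by
    have hsq := pow_le_pow_left₀ (by positivity) (abs_two_mul_sin_mul_norm_le hA u v w x) 2
    have hcs : (‖magDiff A u v x‖ + ‖magDiff A u w (x + v)‖ + ‖magDiff A u w x‖ +
        ‖magDiff A u v (x + w)‖) ^ 2 ≤ 4 * (‖magDiff A u v x‖ ^ 2 + ‖magDiff A u w (x + v)‖ ^ 2 +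
          ‖magDiff A u w x‖ ^ 2 + ‖magDiff A u v (x + w)‖ ^ 2) := by
      simpa [Fin.sum_univ_four] using sq_sum_le_card_mul_sum_sq (s := Finset.univ)
        (f := ![‖magDiff A u v x‖, ‖magDiff A u w (x + v)‖, ‖magDiff A u w x‖,
          ‖magDiff A u v (x + w)‖])
    rw [mul_pow, sq_abs, mul_pow] at hsq
    rw [norm_eq_abs, sq_abs]
    linarith
  simp only [enorm_eq_nnnorm]
  exact_mod_cast hreal

variable [MeasurableSpace E] [BorelSpace E] {μ : Measure E} [SFinite μ] [μ.IsAddRightInvariant]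
  {S T : Set E}

lemma setLIntegral_enorm_magDiff_sq_le (hA : A.toBilinForm.IsAlt) (hu : ContDiff ℝ 1 u) (v y : E)
    (hST : ∀ x ∈ S, ∀ s ∈ Icc (0 : ℝ) 1, x + y + s • v ∈ T) :
    ∫⁻ x in S, ‖magDiff A u v (x + y)‖ₑ ^ 2 ∂μ ≤ ∫⁻ x in T, ‖magDeriv A u v x‖ₑ ^ 2 ∂μ := by
  have hcont := continuous_magDeriv (A := A) hu v
  have htranslate (s : ℝ) (hs : s ∈ Icc (0 : ℝ) 1) :
      ∫⁻ x in S, ‖magDeriv A u v (x + y + s • v)‖ₑ ^ 2 ∂μ ≤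
        ∫⁻ x in T, ‖magDeriv A u v x‖ₑ ^ 2 ∂μ := by
    simp only [add_assoc] at hST ⊢
    calc ∫⁻ x in S, ‖magDeriv A u v (x + (y + s • v))‖ₑ ^ 2 ∂μ
        ≤ ∫⁻ x in (· + (y + s • v)) ⁻¹' T, ‖magDeriv A u v (x + (y + s • v))‖ₑ ^ 2 ∂μ :=
          lintegral_mono_set fun x hx => hST x hx s hs
      _ = ∫⁻ x in T, ‖magDeriv A u v x‖ₑ ^ 2 ∂μ :=
          (measurePreserving_add_right μ (y + s • v)).setLIntegral_comp_preimage_emb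
            (measurableEmbedding_addRight _) (fun x => ‖magDeriv A u v x‖ₑ ^ 2) T
  calc ∫⁻ x in S, ‖magDiff A u v (x + y)‖ₑ ^ 2 ∂μ
      ≤ ∫⁻ x in S, (∫⁻ s in Icc (0 : ℝ) 1, ‖magDeriv A u v (x + y + s • v)‖ₑ ^ 2) ∂μ :=
        lintegral_mono fun x => enorm_magDiff_sq_le_lintegral hA hu v (x + y)
    _ = ∫⁻ s in Icc (0 : ℝ) 1, (∫⁻ x in S, ‖magDeriv A u v (x + y + s • v)‖ₑ ^ 2 ∂μ) := by
        refine lintegral_lintegral_swap (Measurable.aemeasurable ?_)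
        exact Measurable.pow_const (Continuous.measurable (by fun_prop)) 2
    _ ≤ ∫⁻ _ in Icc (0 : ℝ) 1, (∫⁻ x in T, ‖magDeriv A u v x‖ₑ ^ 2 ∂μ) :=
        setLIntegral_mono' measurableSet_Icc htranslate
    _ = ∫⁻ x in T, ‖magDeriv A u v x‖ₑ ^ 2 ∂μ := by simp

theorem enorm_sin_sq_mul_setLIntegral_enorm_sq_le (hA : A.toBilinForm.IsAlt)
    (hu : ContDiff ℝ 1 u) (v w : E)
    (hST : ∀ x ∈ S, ∀ s ∈ Icc (0 : ℝ) 1, ∀ t ∈ Icc (0 : ℝ) 1, x + s • v + t • w ∈ T) :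
    ‖sin (A v w)‖ₑ ^ 2 * ∫⁻ x in S, ‖u x‖ₑ ^ 2 ∂μ ≤
      2 * ∫⁻ x in T, (‖magDeriv A u v x‖ₑ ^ 2 + ‖magDeriv A u w x‖ₑ ^ 2) ∂μ := by
  have h₀ : (0 : ℝ) ∈ Icc (0 : ℝ) 1 := by simp
  have h₁ : (1 : ℝ) ∈ Icc (0 : ℝ) 1 := by simp
  have hside_v : ∫⁻ x in S, ‖magDiff A u v x‖ₑ ^ 2 ∂μ ≤ ∫⁻ x in T, ‖magDeriv A u v x‖ₑ ^ 2 ∂μ := by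
    simpa using setLIntegral_enorm_magDiff_sq_le (μ := μ) hA hu v 0
      fun x hx s hs => by simpa using hST x hx s hs 0 h₀
  have hside_w : ∫⁻ x in S, ‖magDiff A u w x‖ₑ ^ 2 ∂μ ≤ ∫⁻ x in T, ‖magDeriv A u w x‖ₑ ^ 2 ∂μ := by
    simpa using setLIntegral_enorm_magDiff_sq_le (μ := μ) hA hu w 0
      fun x hx t ht => by simpa using hST x hx 0 h₀ t ht
  have hside_vw := setLIntegral_enorm_magDiff_sq_le (μ := μ) hA hu w v
    fun x hx t ht => by simpa using hST x hx 1 h₁ t ht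
  have hside_wv := setLIntegral_enorm_magDiff_sq_le (μ := μ) hA hu v w
    fun x hx s hs => by simpa [add_right_comm] using hST x hx s hs 1 h₁
  have hmeas_diff (v y : E) : Measurable fun x => ‖magDiff A u v (x + y)‖ₑ ^ 2 := by
    have := continuous_magDiff (A := A) hu.continuous v
    exact Measurable.pow_const (Continuous.measurable (by fun_prop)) 2
  have hmeas_diff₀ : Measurable fun x => ‖magDiff A u w x‖ₑ ^ 2 := by simpa using hmeas_diff w 0
  have hmeas_deriv : Measurable fun x => ‖magDeriv A u v x‖ₑ ^ 2 :=
    (continuous_magDeriv hu v).enorm.measurable.pow_const 2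
  calc ‖sin (A v w)‖ₑ ^ 2 * ∫⁻ x in S, ‖u x‖ₑ ^ 2 ∂μ
      = ∫⁻ x in S, ‖sin (A v w)‖ₑ ^ 2 * ‖u x‖ₑ ^ 2 ∂μ :=
        (lintegral_const_mul' _ _ (by simp)).symm
    _ ≤ ∫⁻ x in S, (‖magDiff A u v x‖ₑ ^ 2 + ‖magDiff A u w (x + v)‖ₑ ^ 2 +
          ‖magDiff A u w x‖ₑ ^ 2 + ‖magDiff A u v (x + w)‖ₑ ^ 2) ∂μ :=
        lintegral_mono fun x => enorm_sin_sq_mul_enorm_sq_le hA u v w x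
    _ = ∫⁻ x in S, ‖magDiff A u v x‖ₑ ^ 2 ∂μ + ∫⁻ x in S, ‖magDiff A u w (x + v)‖ₑ ^ 2 ∂μ +
          ∫⁻ x in S, ‖magDiff A u w x‖ₑ ^ 2 ∂μ + ∫⁻ x in S, ‖magDiff A u v (x + w)‖ₑ ^ 2 ∂μ := by
        rw [lintegral_add_right _ (hmeas_diff v w), lintegral_add_right _ hmeas_diff₀,
          lintegral_add_right _ (hmeas_diff w v)]
    _ ≤ ∫⁻ x in T, ‖magDeriv A u v x‖ₑ ^ 2 ∂μ + ∫⁻ x in T, ‖magDeriv A u w x‖ₑ ^ 2 ∂μ +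
          ∫⁻ x in T, ‖magDeriv A u w x‖ₑ ^ 2 ∂μ + ∫⁻ x in T, ‖magDeriv A u v x‖ₑ ^ 2 ∂μ := by
        gcongr
    _ = 2 * ∫⁻ x in T, (‖magDeriv A u v x‖ₑ ^ 2 + ‖magDeriv A u w x‖ₑ ^ 2) ∂μ := by
        rw [lintegral_add_left hmeas_deriv]
        ring

end Magnetic

/-- The potential `A₀` as a bilinear form: `symmGauge x v` is the pairing of `A₀ x` with `v`. -/
def symmGauge : ℝ × ℝ →L[ℝ] ℝ × ℝ →L[ℝ] ℝ :=
  (2⁻¹ : ℝ) • ((ContinuousLinearMap.fst ℝ ℝ ℝ).smulRight (ContinuousLinearMap.snd ℝ ℝ ℝ) -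
    (ContinuousLinearMap.snd ℝ ℝ ℝ).smulRight (ContinuousLinearMap.fst ℝ ℝ ℝ))

lemma symmGauge_apply (x v : ℝ × ℝ) : symmGauge x v = (x.1 * v.2 - x.2 * v.1) / 2 := by
  simp only [symmGauge, smul_apply, sub_apply, ContinuousLinearMap.smulRight_apply,
    ContinuousLinearMap.coe_fst', ContinuousLinearMap.coe_snd', smul_eq_mul]
  ring

lemma isAlt_symmGauge : symmGauge.toBilinForm.IsAlt := by
  intro x
  rw [ContinuousLinearMap.toBilinForm_apply, symmGauge_apply]
  ring

lemma magGradSq_nonneg (A : ℝ × ℝ → ℝ × ℝ) (u : ℝ × ℝ → ℂ) (x : ℝ × ℝ) : 0 ≤ magGradSq A u x := by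
  unfold magGradSq
  positivity

lemma ofReal_magGradSq_A₀ (u : ℝ × ℝ → ℂ) (x : ℝ × ℝ) :
    ENNReal.ofReal (magGradSq A₀ u x) =
      ‖magDeriv symmGauge u (1, 0) x‖ₑ ^ 2 + ‖magDeriv symmGauge u (0, 1) x‖ₑ ^ 2 := by
  simp only [← ofReal_norm, ← ENNReal.ofReal_pow (norm_nonneg _)]
  rw [← ENNReal.ofReal_add (by positivity) (by positivity)]
  simp [magGradSq, magDeriv, symmGauge_apply, A₀]

lemma continuous_magGradSq {A : ℝ × ℝ → ℝ × ℝ} (hA : Continuous A) {u : ℝ × ℝ → ℂ}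
    (hu : ContDiff ℝ 1 u) : Continuous (magGradSq A u) := by
  have hcont := hu.continuous
  unfold magGradSq
  fun_prop

lemma integrableOn_Qsq {f : ℝ × ℝ → ℝ} (hf : Continuous f) (r : ℝ) : IntegrableOn f (Qsq r) := by
  refine (hf.integrableOn_Icc (a := (-r / 2, -r / 2)) (b := (r / 2, r / 2))).mono_set ?_
  rw [← Icc_prod_Icc]
  exact prod_mono Ioo_subset_Icc_self Ioo_subset_Icc_self

/-- The part of `Q_r` where the first coordinate does not have the sign `ε`, and the second one does
not have the sign `δ`, so that there is room in `Q_r` in the directions `(ε, 0)` and `(0, δ)`. -/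
def Qquadrant (r : ℝ) (ε δ : ℤˣ) : Set (ℝ × ℝ) := {x ∈ Qsq r | ε * x.1 ≤ 0 ∧ δ * x.2 ≤ 0}

lemma Qsq_subset_iUnion_Qquadrant (r : ℝ) : Qsq r ⊆ ⋃ σ : ℤˣ × ℤˣ, Qquadrant r σ.1 σ.2 := by
  have hsign (t : ℝ) : ∃ ε : ℤˣ, ε * t ≤ 0 := by
    rcases le_total t 0 with ht | ht
    · exact ⟨1, by simpa using ht⟩
    · exact ⟨-1, by simpa using ht⟩
  intro x hx
  obtain ⟨ε, hε⟩ := hsign x.1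
  obtain ⟨δ, hδ⟩ := hsign x.2
  exact mem_iUnion.2 ⟨(ε, δ), hx, hε, hδ⟩

lemma add_mul_unit_mem_Ioo {r ℓ s t : ℝ} {ε : ℤˣ} (hℓ : 0 ≤ ℓ) (hr : 2 * ℓ < r)
    (hs : s ∈ Icc (0 : ℝ) 1) (ht : t ∈ Ioo (-r / 2) (r / 2)) (hε : ε * t ≤ 0) :
    t + s * (ℓ * ε) ∈ Ioo (-r / 2) (r / 2) := by
  have hsℓ : 0 ≤ s * ℓ := mul_nonneg hs.1 hℓ
  have hsℓ' : s * ℓ ≤ ℓ := mul_le_of_le_one_left hℓ hs.2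
  obtain ⟨ht₁, ht₂⟩ := ht
  rcases Int.units_eq_one_or ε with rfl | rfl
  · have : t ≤ 0 := by simpa using hε
    constructor <;> push_cast <;> linarith
  · have : 0 ≤ t := by simpa using hε
    constructor <;> push_cast <;> linarith

section SquareEstimates

variable {u : ℝ × ℝ → ℂ} {b r ℓ : ℝ}

lemma setLIntegral_Qquadrant_enorm_sq_le (hu : ContDiff ℝ 1 u) (hℓ : 0 ≤ ℓ) (hr : 2 * ℓ < r)
    (ε δ : ℤˣ) :
    ‖sin (ℓ ^ 2 / 2)‖ₑ ^ 2 * ∫⁻ x in Qquadrant r ε δ, ‖u x‖ₑ ^ 2 ≤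
      2 * ‖ℓ‖ₑ ^ 2 * ∫⁻ x in Qsq r, ENNReal.ofReal (magGradSq A₀ u x) := by
  set v : ℝ × ℝ := (ℓ * ε : ℝ) • (1, 0) with hv
  set w : ℝ × ℝ := (ℓ * δ : ℝ) • (0, 1) with hw
  have henorm (ε : ℤˣ) : ‖(ℓ * ε : ℝ)‖ₑ = ‖ℓ‖ₑ := by
    rcases Int.units_eq_one_or ε with rfl | rfl <;> simp
  have hflux : ‖sin (symmGauge v w)‖ₑ = ‖sin (ℓ ^ 2 / 2)‖ₑ := by
    rw [symmGauge_apply]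
    rcases Int.units_eq_one_or ε with rfl | rfl <;> rcases Int.units_eq_one_or δ with rfl | rfl <;>
      simp [hv, hw, neg_div, sq]
  have hgrad (x : ℝ × ℝ) : ‖magDeriv symmGauge u v x‖ₑ ^ 2 + ‖magDeriv symmGauge u w x‖ₑ ^ 2 =
      ‖ℓ‖ₑ ^ 2 * ENNReal.ofReal (magGradSq A₀ u x) := by
    rw [hv, hw, magDeriv_smul, magDeriv_smul, enorm_smul, enorm_smul, henorm, henorm,
      ofReal_magGradSq_A₀]
    ring
  have hpar (x : ℝ × ℝ) (hx : x ∈ Qquadrant r ε δ) (s : ℝ) (hs : s ∈ Icc (0 : ℝ) 1)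
      (t : ℝ) (ht : t ∈ Icc (0 : ℝ) 1) : x + s • v + t • w ∈ Qsq r := by
    obtain ⟨⟨hx₁, hx₂⟩, hε, hδ⟩ := hx
    simpa [Qsq, hv, hw] using
      And.intro (add_mul_unit_mem_Ioo hℓ hr hs hx₁ hε) (add_mul_unit_mem_Ioo hℓ hr ht hx₂ hδ)
  have hpoincare := enorm_sin_sq_mul_setLIntegral_enorm_sq_le (μ := volume) isAlt_symmGauge hu v w
    hpar
  simp only [hflux, hgrad] at hpoincare
  rwa [lintegral_const_mul' _ _ (by simp), ← mul_assoc] at hpoincare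

lemma setLIntegral_Qsq_enorm_sq_le (hu : ContDiff ℝ 1 u) (hℓ : 0 ≤ ℓ) (hr : 2 * ℓ < r) :
    ‖sin (ℓ ^ 2 / 2)‖ₑ ^ 2 * ∫⁻ x in Qsq r, ‖u x‖ₑ ^ 2 ≤
      8 * ‖ℓ‖ₑ ^ 2 * ∫⁻ x in Qsq r, ENNReal.ofReal (magGradSq A₀ u x) := by
  calc ‖sin (ℓ ^ 2 / 2)‖ₑ ^ 2 * ∫⁻ x in Qsq r, ‖u x‖ₑ ^ 2
      ≤ ‖sin (ℓ ^ 2 / 2)‖ₑ ^ 2 * ∑ σ : ℤˣ × ℤˣ, ∫⁻ x in Qquadrant r σ.1 σ.2, ‖u x‖ₑ ^ 2 := by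
        gcongr
        exact (lintegral_mono_set (Qsq_subset_iUnion_Qquadrant r)).trans
          ((lintegral_iUnion_le _ _).trans_eq (tsum_fintype _))
    _ ≤ ∑ _σ : ℤˣ × ℤˣ, 2 * ‖ℓ‖ₑ ^ 2 * ∫⁻ x in Qsq r, ENNReal.ofReal (magGradSq A₀ u x) := by
        rw [Finset.mul_sum]
        exact Finset.sum_le_sum fun σ _ => setLIntegral_Qquadrant_enorm_sq_le hu hℓ hr σ.1 σ.2
    _ = 8 * ‖ℓ‖ₑ ^ 2 * ∫⁻ x in Qsq r, ENNReal.ofReal (magGradSq A₀ u x) := by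
        simp only [Finset.sum_const, Finset.card_univ, Fintype.card_prod, Fintype.card_units_int,
          Nat.reduceMul, nsmul_eq_mul, Nat.cast_ofNat]
        ring

theorem sin_sq_mul_setIntegral_Qsq_norm_sq_le (hu : ContDiff ℝ 1 u) (hℓ : 0 ≤ ℓ)
    (hr : 2 * ℓ < r) :
    sin (ℓ ^ 2 / 2) ^ 2 * ∫ x in Qsq r, ‖u x‖ ^ 2 ≤
      8 * ℓ ^ 2 * ∫ x in Qsq r, magGradSq A₀ u x := by
  have hA₀ : Continuous A₀ := by unfold A₀; fun_prop
  have hcont := hu.continuous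
  have hmass : ∫⁻ x in Qsq r, ‖u x‖ₑ ^ 2 = ENNReal.ofReal (∫ x in Qsq r, ‖u x‖ ^ 2) := by
    rw [ofReal_integral_eq_lintegral_ofReal (integrableOn_Qsq (by fun_prop) r)
      (Eventually.of_forall fun x => by positivity)]
    simp only [ENNReal.ofReal_pow (norm_nonneg _), ofReal_norm]
  have hle := setLIntegral_Qsq_enorm_sq_le hu hℓ hr
  rw [hmass, ← ofReal_integral_eq_lintegral_ofReal
      (integrableOn_Qsq (continuous_magGradSq hA₀ hu) r)
      (Eventually.of_forall (magGradSq_nonneg A₀ u)),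
    ← ofReal_norm, ← ofReal_norm, ← ENNReal.ofReal_pow (norm_nonneg _),
    ← ENNReal.ofReal_pow (norm_nonneg _), show (8 : ℝ≥0∞) = ENNReal.ofReal 8 by simp,
    ← ENNReal.ofReal_mul (by positivity), ← ENNReal.ofReal_mul (by positivity),
    ← ENNReal.ofReal_mul (by positivity), norm_eq_abs, norm_eq_abs, sq_abs, sq_abs] at hle
  have henergy : 0 ≤ ∫ x in Qsq r, magGradSq A₀ u x := integral_nonneg (magGradSq_nonneg A₀ u)
  exact (ENNReal.ofReal_le_ofReal_iff (by positivity)).1 hle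

lemma Fsq_nonneg (hu : ContDiff ℝ 1 u) (hℓ : 0 < ℓ) (hr : 2 * ℓ < r)
    (hb : 8 * ℓ ^ 2 ≤ b * sin (ℓ ^ 2 / 2) ^ 2) : 0 ≤ Fsq b r u := by
  have hA₀ : Continuous A₀ := by unfold A₀; fun_prop
  have hcont := hu.continuous
  have hgrad := continuous_magGradSq hA₀ hu
  have henergy : 0 ≤ ∫ x in Qsq r, magGradSq A₀ u x := integral_nonneg (magGradSq_nonneg A₀ u)
  have hquartic : 0 ≤ ∫ x in Qsq r, ‖u x‖ ^ 4 / 2 := integral_nonneg fun x => by positivity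
  have hsin : 0 < sin (ℓ ^ 2 / 2) ^ 2 := by
    refine (sq_nonneg _).lt_of_ne' fun h => ?_
    rw [h, mul_zero] at hb
    exact hb.not_gt (by positivity)
  have hmass : ∫ x in Qsq r, ‖u x‖ ^ 2 ≤ b * ∫ x in Qsq r, magGradSq A₀ u x := by
    refine le_of_mul_le_mul_left ?_ hsin
    calc sin (ℓ ^ 2 / 2) ^ 2 * ∫ x in Qsq r, ‖u x‖ ^ 2
        ≤ 8 * ℓ ^ 2 * ∫ x in Qsq r, magGradSq A₀ u x :=
          sin_sq_mul_setIntegral_Qsq_norm_sq_le hu hℓ.le hr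
      _ ≤ b * sin (ℓ ^ 2 / 2) ^ 2 * ∫ x in Qsq r, magGradSq A₀ u x := by gcongr
      _ = sin (ℓ ^ 2 / 2) ^ 2 * (b * ∫ x in Qsq r, magGradSq A₀ u x) := by ring
  have hsplit : Fsq b r u = b * (∫ x in Qsq r, magGradSq A₀ u x) - (∫ x in Qsq r, ‖u x‖ ^ 2) +
      ∫ x in Qsq r, ‖u x‖ ^ 4 / 2 := by
    rw [Fsq, integral_add (integrableOn_Qsq (by fun_prop) r) (integrableOn_Qsq (by fun_prop) r),
      integral_sub (integrableOn_Qsq (by fun_prop) r) (integrableOn_Qsq (by fun_prop) r),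
      integral_const_mul]
  linarith

theorem eN_eq_zero_general (hℓ : 0 < ℓ) (hr : 2 * ℓ < r)
    (hb : 8 * ℓ ^ 2 ≤ b * sin (ℓ ^ 2 / 2) ^ 2) : eN b r = 0 := by
  have hleast : IsLeast (Fsq b r '' {u | MemH1sq u}) 0 := by
    constructor
    · have hzero : MemH1sq fun _ => 0 := contDiff_const
      exact ⟨fun _ => 0, hzero, by simp [Fsq, magGradSq]⟩
    · rintro _ ⟨u, hu, rfl⟩
      exact Fsq_nonneg hu hℓ hr hb
  exact hleast.csInf_eq

end SquareEstimates

/-- The Neumann energy vanishes for large `b` and `r`. -/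
theorem eN_eq_zero : ∃ r₀ > (0:ℝ), ∀ r ≥ r₀, ∀ b ≥ r₀, eN b r = 0 := by
  -- For `ℓ = √π` the parallelograms carry flux `π`, so the holonomy is `-1`.
  refine ⟨8 * π, by positivity, fun r hr b hb => eN_eq_zero_general (ℓ := √π) (by positivity) ?_ ?_⟩
  · have hsqrt : √π ≤ π := sqrt_le_self_iff.2 (.inr (by linarith [pi_gt_three]))
    linarith [pi_pos]
  · simpa [sq_sqrt pi_nonneg] using hb

end
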